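/- The special value ζ₂(4,1,1,1,1,1; G₂) equals (1/18)·ζ(4)·ζ(5) + (145/648)·ζ(2)·ζ(7) − (19753/46656)·ζ(9). -/

import Mathlib

/-- The zeta-function of the root system `G₂` at a tuple of natural number exponents:
`ζ₂(s₁,…,s₆;G₂) = ∑_{m,n≥1} 1/(m^{s₁} n^{s₂} (m+n)^{s₃} (m+2n)^{s₄} (m+3n)^{s₅} (2m+3n)^{s₆})`. -/
noncomputable def zetaG2 (s₁ s₂ s₃ s₄ s₅ s₆ : ℕ) : ℝ :=
  ∑' (m : ℕ+) (n : ℕ+),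
    1 / (((m : ℕ) : ℝ) ^ s₁ * ((n : ℕ) : ℝ) ^ s₂ * (((m : ℕ) : ℝ) + ((n : ℕ) : ℝ)) ^ s₃ *
      (((m : ℕ) : ℝ) + 2 * ((n : ℕ) : ℝ)) ^ s₄ * (((m : ℕ) : ℝ) + 3 * ((n : ℕ) : ℝ)) ^ s₅ *
      (2 * ((m : ℕ) : ℝ) + 3 * ((n : ℕ) : ℝ)) ^ s₆)

/-! With the convention `1 / 0 = 0` the summand extends to all `(m, n) ∈ ℤ × ℤ`. It is odd under
`(m, n) ↦ (-m, -n)` and under the Weyl reflection `(m, n) ↦ (m, -m - n)`, and these two symmetries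
trade the sum over the quadrant `m, n ≥ 1` for half the sum over all `m ∈ ℤ` and `n ≥ 1`. For fixed
`n` the inner sum is evaluated by partial fractions in `t = m / n`: summed symmetrically, the odd
powers of the linear forms cancel, the even powers of `t` give `ζ(4)` and `ζ(2)`, and the lattice
points on the poles contribute a multiple of `1 / n ^ 9`. The pole `t = -3 / 2` is a lattice point
only for even `n`, which produces the additional term `ζ(9) / 2 ^ 9`. -/

open Filter Topology SummationFilter

theorem hasSum_ite_eq_of_injective {ι α E : Type*} [AddCommMonoid E] [TopologicalSpace E]
    [DecidableEq α] {φ : ι → α} (hφ : Function.Injective φ) (a : α) (c : E)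
    [Decidable (a ∈ Set.range φ)] :
    HasSum (fun i ↦ if φ i = a then c else 0) (if a ∈ Set.range φ then c else 0) := by
  classical
  split_ifs with h
  · obtain ⟨i, rfl⟩ := h
    simpa only [hφ.eq_iff] using hasSum_ite_eq i c
  · have hne (i : ι) : φ i ≠ a := fun hi ↦ h ⟨i, hi⟩
    simpa only [hne, if_false] using hasSum_zero

theorem hasSum_one_div_div_pow {L : SummationFilter ℤ} {k : ℕ} {a : ℝ}
    (h : HasSum (fun m : ℤ ↦ 1 / (m : ℝ) ^ k) a L) (c : ℝ) :
    HasSum (fun m : ℤ ↦ 1 / (m / c) ^ k) (c ^ k * a) L := by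
  refine (h.mul_left (c ^ k)).congr_fun fun m ↦ ?_
  rw [div_pow, one_div_div, mul_one_div]

section PrincipalValue

variable {E : Type*} {f : ℤ → E}

theorem hasSum_symmetricIco_sub_comp_add [AddCommGroup E] [TopologicalSpace E]
    [IsTopologicalAddGroup E] (hf : Tendsto f cofinite (𝓝 0)) (k : ℤ) :
    HasSum (fun m ↦ f m - f (m + k)) 0 (symmetricIco ℤ) := by
  have hshift (j : ℤ) : Tendsto (fun m ↦ f (m + j)) cofinite (𝓝 0) :=
    hf.comp (add_left_injective j).tendsto_cofinite
  have hone {g : ℤ → E} (hg : Tendsto g cofinite (𝓝 0)) :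
      HasSum (fun m ↦ g m - g (m + 1)) 0 (symmetricIco ℤ) := by
    rw [hasSum_symmetricIco_int_iff]
    simp only [Finset.sum_Ico_int_sub]
    have hpos : Tendsto (fun N : ℕ ↦ g N) atTop (𝓝 0) :=
      hg.comp (Nat.cofinite_eq_atTop ▸ Nat.cast_injective.tendsto_cofinite)
    have hneg : Tendsto (fun N : ℕ ↦ g (-N)) atTop (𝓝 0) :=
      hg.comp (Nat.cofinite_eq_atTop ▸ (neg_injective.comp Nat.cast_injective).tendsto_cofinite)
    simpa only [sub_zero] using hneg.sub hpos
  induction k using Int.induction_on with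
  | zero => simpa only [add_zero, sub_self] using hasSum_zero
  | succ j ih =>
    refine (add_zero (0 : E) ▸ ih.add (hone (hshift j))).congr_fun fun m ↦ ?_
    rw [sub_add_sub_cancel, add_right_comm, add_assoc]
  | pred j ih =>
    refine (sub_zero (0 : E) ▸ ih.sub (hone (hshift (-j - 1)))).congr_fun fun m ↦ ?_
    rw [add_right_comm, add_assoc, sub_add_cancel, sub_sub_sub_cancel_right]

theorem hasSum_symmetricIco_of_antisymm [NormedAddCommGroup E] [NormedSpace ℝ E]
    (hf : Tendsto f cofinite (𝓝 0)) {c : ℤ} (hc : ∀ m, f (c - m) = -f m) :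
    HasSum f 0 (symmetricIco ℤ) := by
  have h := hasSum_symmetricIco_sub_comp_add hf (c + 1)
  rw [hasSum_symmetricIco_int_iff] at h ⊢
  have hdouble (N : ℕ) : ∑ m ∈ Finset.Ico (-(N : ℤ)) N, (f m - f (m + (c + 1))) =
      (2 : ℝ) • ∑ m ∈ Finset.Ico (-(N : ℤ)) N, f m := by
    have hreflect : ∑ m ∈ Finset.Ico (-(N : ℤ)) N, f m =
        ∑ m ∈ Finset.Ico (-(N : ℤ)) N, -f (m + (c + 1)) := by
      refine Finset.sum_equiv (Equiv.subLeft (-1)) (fun m ↦ ?_) fun m _ ↦ ?_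
      · simp only [Finset.mem_Ico, Equiv.subLeft_apply]
        lia
      · rw [← hc, Equiv.subLeft_apply]
        ring_nf
    rw [two_smul, Finset.sum_sub_distrib, sub_eq_add_neg, ← Finset.sum_neg_distrib, ← hreflect]
  simpa [hdouble, smul_smul] using h.const_smul (2⁻¹ : ℝ)

theorem tendsto_inv_mul_intCast_add_cofinite {a : ℝ} (ha : a ≠ 0) (b : ℝ) :
    Tendsto (fun m : ℤ ↦ (a * m + b)⁻¹) cofinite (𝓝 0) := by
  have hcast : Tendsto (fun m : ℤ ↦ (m : ℝ)) cofinite (Bornology.cobounded ℝ) := by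
    simpa only [Metric.cobounded_eq_cocompact] using Int.tendsto_coe_cofinite
  exact tendsto_inv₀_cobounded.comp ((tendsto_add_const_cobounded b).comp
    ((tendsto_mul_left_cobounded ha).comp hcast))

theorem hasSum_symmetricIco_inv_mul_add {a b : ℝ} (ha : a ≠ 0) {k : ℤ} (hk : 2 * b = k * a) :
    HasSum (fun m : ℤ ↦ (a * m + b)⁻¹) 0 (symmetricIco ℤ) := by
  refine hasSum_symmetricIco_of_antisymm (tendsto_inv_mul_intCast_add_cofinite ha b)
    (c := -k) fun m ↦ ?_
  rw [← inv_neg]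
  push_cast
  congr 1
  linarith

theorem hasSum_symmetricIco_one_div_pow_of_odd {k : ℕ} (hk : Odd k) :
    HasSum (fun m : ℤ ↦ 1 / (m : ℝ) ^ k) 0 (symmetricIco ℤ) := by
  refine hasSum_symmetricIco_of_antisymm (c := 0) ?_ fun m ↦ ?_
  · simpa [hk.pos.ne'] using (tendsto_inv_mul_intCast_add_cofinite one_ne_zero 0).pow k
  · rw [zero_sub, Int.cast_neg, hk.neg_pow, one_div_neg_eq_neg_one_div]

theorem hasSum_symmetricIco_inv_mul_div_add {a b : ℝ} (ha : a ≠ 0) {k : ℤ} (hk : 2 * b = k * a)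
    {n : ℕ} (hn : n ≠ 0) : HasSum (fun m : ℤ ↦ (a * (m / n) + b)⁻¹) 0 (symmetricIco ℤ) := by
  have hn' : (n : ℝ) ≠ 0 := Nat.cast_ne_zero.mpr hn
  have hkn : 2 * b = (k * n : ℤ) * (a / n) := by
    rw [hk]
    push_cast
    field_simp
  simpa only [mul_div_assoc', div_mul_eq_mul_div] using
    hasSum_symmetricIco_inv_mul_add (div_ne_zero ha hn') hkn

end PrincipalValue

section Quadrant

theorem two_mul_tsum_tsum_pnat_eq_tsum_tsum_int {f : ℤ → ℤ → ℝ}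
    (hf : Summable fun p : ℤ × ℤ ↦ f p.1 p.2) (hleft : ∀ n, f 0 n = 0) (hright : ∀ m, f m 0 = 0)
    (hneg : ∀ m n, f (-m) (-n) = -f m n) (hrefl : ∀ m n, f m (-m - n) = -f m n) :
    2 * ∑' (m : ℕ+) (n : ℕ+), f m n = ∑' (n : ℕ+) (m : ℤ), f m n := by
  have hinj : Function.Injective fun n : ℕ+ ↦ (n : ℤ) :=
    Nat.cast_injective.comp PNat.coe_injective
  have hpos : Summable fun p : ℕ+ × ℕ+ ↦ f p.1 p.2 := hf.comp_injective (hinj.prodMap hinj)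
  have hmixed : Summable fun p : ℕ+ × ℕ+ ↦ f p.1 (-p.2) :=
    hf.comp_injective (hinj.prodMap (neg_injective.comp hinj))
  have hrow (m : ℤ) : ∑' n : ℕ+, f m n = -∑' n : ℕ+, f m (-n) := by
    have hzero : ∑' n : ℤ, f m n = -∑' n : ℤ, f m n := by
      rw [← tsum_neg, ← (Equiv.subLeft (-m)).tsum_eq]
      exact tsum_congr (hrefl m)
    have hsplit := tsum_int_eq_zero_add_tsum_pnat (hf.prod_factor m)
    simp only [hright, zero_add] at hsplit
    linarith
  have hcol (n : ℤ) : ∑' m : ℤ, f m n = ∑' m : ℕ+, f m n - ∑' m : ℕ+, f m (-n) := by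
    have hsplit := tsum_int_eq_zero_add_tsum_pnat (hf.prod_symm.prod_factor n)
    have hflip (m : ℤ) : f (-m) n = -f m (-n) := by rw [← hneg, neg_neg]
    simpa only [Prod.swap_prod_mk, hleft, zero_add, hflip, tsum_neg, ← sub_eq_add_neg] using hsplit
  calc 2 * ∑' (m : ℕ+) (n : ℕ+), f m n
      = ∑' (m : ℕ+) (n : ℕ+), f m n - ∑' (m : ℕ+) (n : ℕ+), f m (-n) := by
        rw [two_mul, sub_eq_add_neg, ← tsum_neg]
        simp only [← hrow]
    _ = ∑' (n : ℕ+) (m : ℕ+), f m n - ∑' (n : ℕ+) (m : ℕ+), f m (-n) := by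
        rw [Summable.tsum_comm (f := fun n m : ℕ+ ↦ f m n) hpos.prod_symm,
          Summable.tsum_comm (f := fun n m : ℕ+ ↦ f m (-n)) hmixed.prod_symm]
    _ = ∑' (n : ℕ+) (m : ℤ), f m n := by
        simp only [hcol]
        exact (hpos.prod_symm.prod.tsum_sub hmixed.prod_symm.prod).symm

end Quadrant

section Zeta

theorem hasSum_one_div_pnat_pow {k : ℕ} (hk : 1 < k) :
    HasSum (fun n : ℕ+ ↦ 1 / (n : ℝ) ^ k) (riemannZeta k).re := by
  have hzeta : (riemannZeta k).re = ∑' n : ℕ, 1 / (n : ℝ) ^ k := by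
    rw [zeta_nat_eq_tsum_of_gt_one hk, ← Complex.ofReal_re (∑' n : ℕ, 1 / (n : ℝ) ^ k)]
    push_cast
    rfl
  rw [hasSum_pnat_iff (f := fun n : ℕ ↦ 1 / (n : ℝ) ^ k), hzeta]
  simpa [(zero_lt_one.trans hk).ne'] using (Real.summable_one_div_nat_pow.mpr hk).hasSum

theorem ofReal_re_riemannZeta_ofNat (k : ℕ) [k.AtLeastTwo] :
    ((riemannZeta ofNat(k)).re : ℂ) = riemannZeta ofNat(k) := by
  have hk : 1 < (ofNat(k) : ℝ) := Nat.one_lt_cast.mpr Nat.AtLeastTwo.prop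
  refine Complex.ext rfl ?_
  rw [Complex.ofReal_im, ← Complex.ofReal_ofNat, riemannZeta_im_eq_zero_of_one_lt hk]

theorem hasSum_one_div_int_pow_of_even {k : ℕ} (hk : 1 < k) (heven : Even k) :
    HasSum (fun m : ℤ ↦ 1 / (m : ℝ) ^ k) (2 * (riemannZeta k).re) := by
  have hs : Summable fun m : ℤ ↦ 1 / (m : ℝ) ^ k := Real.summable_one_div_int_pow.mpr hk
  have hsplit := tsum_int_eq_zero_add_two_mul_tsum_pnat (fun m ↦ by simp [heven.neg_pow]) hs
  have hzero : 1 / ((0 : ℤ) : ℝ) ^ k = 0 := by simp [(zero_lt_one.trans hk).ne']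
  simp only [Int.cast_natCast, (hasSum_one_div_pnat_pow hk).tsum_eq, hzero, zero_add,
    nsmul_eq_mul, Nat.cast_ofNat] at hsplit
  exact hsplit ▸ hs.hasSum

theorem hasSum_ite_even_one_div_pnat_pow {k : ℕ} (hk : 1 < k) :
    HasSum (fun n : ℕ+ ↦ if Even (n : ℕ) then 1 / (n : ℝ) ^ k else 0)
      ((riemannZeta k).re / 2 ^ k) := by
  have hinj : Function.Injective fun n : ℕ+ ↦ 2 * n := mul_right_injective 2
  have hodd (n : ℕ+) (hn : n ∉ Set.range fun n : ℕ+ ↦ 2 * n) :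
      (if Even (n : ℕ) then 1 / (n : ℝ) ^ k else 0) = 0 := by
    refine if_neg fun ⟨r, hr⟩ ↦ hn ⟨⟨r, ?_⟩, PNat.eq ?_⟩
    · have := n.pos
      lia
    · exact (hr.trans (two_mul r).symm).symm
  refine (hinj.hasSum_iff hodd).mp (((hasSum_one_div_pnat_pow hk).div_const (2 ^ k)).congr_fun
    fun n ↦ ?_)
  simp [mul_pow, mul_comm, div_eq_mul_inv]

end Zeta

/-- The summand of `zetaG2` as a function of two real variables. It vanishes on the lines where one
of the factors with nonzero exponent does, because `1 / 0 = 0`. -/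
noncomputable def zetaG2Term (s₁ s₂ s₃ s₄ s₅ s₆ : ℕ) (x y : ℝ) : ℝ :=
  1 / (x ^ s₁ * y ^ s₂ * (x + y) ^ s₃ * (x + 2 * y) ^ s₄ * (x + 3 * y) ^ s₅ * (2 * x + 3 * y) ^ s₆)

section Term

variable (s₁ s₂ s₃ s₄ s₅ s₆ : ℕ) (x y : ℝ)

theorem zetaG2Term_mul_mul (c : ℝ) :
    zetaG2Term s₁ s₂ s₃ s₄ s₅ s₆ (c * x) (c * y) =
      zetaG2Term s₁ s₂ s₃ s₄ s₅ s₆ x y / c ^ (s₁ + s₂ + s₃ + s₄ + s₅ + s₆) := by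
  have h₃ : c * x + c * y = c * (x + y) := by ring
  have h₄ : c * x + 2 * (c * y) = c * (x + 2 * y) := by ring
  have h₅ : c * x + 3 * (c * y) = c * (x + 3 * y) := by ring
  have h₆ : 2 * (c * x) + 3 * (c * y) = c * (2 * x + 3 * y) := by ring
  simp only [zetaG2Term, h₃, h₄, h₅, h₆, mul_pow, div_div, pow_add]
  congr 1
  ac_rfl

-- Up to sign, the reflection fixes the linear forms with exponents `s₁` and `s₄`, swaps those with
-- `s₂` and `s₃`, and swaps those with `s₅` and `s₆`.
theorem zetaG2Term_neg_sub :
    zetaG2Term s₁ s₂ s₃ s₄ s₅ s₆ x (-x - y) =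
      (-1) ^ (s₂ + s₃ + s₄ + s₅ + s₆) * zetaG2Term s₁ s₃ s₂ s₄ s₆ s₅ x y := by
  have h₂ : -x - y = -(x + y) := by ring
  have h₃ : x + -(x + y) = -y := by ring
  have h₄ : x + 2 * -(x + y) = -(x + 2 * y) := by ring
  have h₅ : x + 3 * -(x + y) = -(2 * x + 3 * y) := by ring
  have h₆ : 2 * x + 3 * -(x + y) = -(x + 3 * y) := by ring
  simp only [zetaG2Term, h₂, h₃, h₄, h₅, h₆, neg_pow (x + y), neg_pow y, neg_pow (x + 2 * y),
    neg_pow (x + 3 * y), neg_pow (2 * x + 3 * y), pow_add, one_div, mul_inv,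
    ← inv_pow, inv_neg, inv_one]
  ring

end Term

theorem zetaG2Term_zero_right {s₂ : ℕ} (hs₂ : s₂ ≠ 0) (s₁ s₃ s₄ s₅ s₆ : ℕ) (x : ℝ) :
    zetaG2Term s₁ s₂ s₃ s₄ s₅ s₆ x 0 = 0 := by
  simp [zetaG2Term, hs₂]

theorem zetaG2Term_zero_left {s₁ : ℕ} (hs₁ : s₁ ≠ 0) (s₂ s₃ s₄ s₅ s₆ : ℕ) (y : ℝ) :
    zetaG2Term s₁ s₂ s₃ s₄ s₅ s₆ 0 y = 0 := by
  simp [zetaG2Term, hs₁]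

section Summability

theorem inv_abs_intCast_le_one (a : ℤ) : |(a : ℝ)|⁻¹ ≤ 1 := by
  simpa only [Nat.cast_natAbs, Int.cast_abs] using Nat.cast_inv_le_one (α := ℝ) a.natAbs

theorem inv_abs_mul_inv_abs_le {a b : ℤ} (hab : a ≠ b) :
    |(a : ℝ)|⁻¹ * |(b : ℝ)|⁻¹ ≤ 2 * |(a : ℝ) - b|⁻¹ := by
  rcases eq_or_ne a 0 with rfl | ha
  · simp
  rcases eq_or_ne b 0 with rfl | hb
  · simp
  have ha' : (1 : ℝ) ≤ |(a : ℝ)| := by exact_mod_cast Int.one_le_abs ha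
  have hb' : (1 : ℝ) ≤ |(b : ℝ)| := by exact_mod_cast Int.one_le_abs hb
  have hsub : 0 < |(a : ℝ) - b| := abs_pos.mpr (sub_ne_zero.mpr (mod_cast hab))
  rw [← mul_inv, ← div_eq_mul_inv, le_div_iff₀ hsub, inv_mul_le_iff₀ (by positivity)]
  nlinarith [abs_sub (a : ℝ) b]

theorem norm_zetaG2Term_le {s₂ s₄ s₅ : ℕ} (h₂ : s₂ ≠ 0) (h₄ : s₄ ≠ 0) (h₅ : s₅ ≠ 0)
    (s₁ s₃ s₆ : ℕ) (m n : ℤ) :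
    ‖zetaG2Term s₁ s₂ s₃ s₄ s₅ s₆ m n‖ ≤ 2 * (1 / |(m : ℝ)| ^ s₁ * (1 / |(n : ℝ)| ^ 2)) := by
  rcases eq_or_ne n 0 with rfl | hn
  · simp [zetaG2Term, h₂]
  have le_one (a : ℤ) (s : ℕ) : |(a : ℝ)|⁻¹ ^ s ≤ 1 :=
    pow_le_one₀ (by positivity) (inv_abs_intCast_le_one a)
  have le_self (a : ℤ) {s : ℕ} (hs : s ≠ 0) : |(a : ℝ)|⁻¹ ^ s ≤ |(a : ℝ)|⁻¹ :=
    pow_le_of_le_one (by positivity) (inv_abs_intCast_le_one a) hs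
  -- `m + 2n` and `m + 3n` differ by `n`; their product supplies the second factor `1 / |n|`.
  have hmid : |((m + 3 * n : ℤ) : ℝ)|⁻¹ * |((m + 2 * n : ℤ) : ℝ)|⁻¹ ≤ 2 * |(n : ℝ)|⁻¹ := by
    refine (inv_abs_mul_inv_abs_le (by lia)).trans_eq ?_
    push_cast
    ring_nf
  calc ‖zetaG2Term s₁ s₂ s₃ s₄ s₅ s₆ m n‖
      = |(m : ℝ)|⁻¹ ^ s₁ * |(n : ℝ)|⁻¹ ^ s₂ * |((m + n : ℤ) : ℝ)|⁻¹ ^ s₃ *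
          (|((m + 3 * n : ℤ) : ℝ)|⁻¹ ^ s₅ * |((m + 2 * n : ℤ) : ℝ)|⁻¹ ^ s₄) *
          |((2 * m + 3 * n : ℤ) : ℝ)|⁻¹ ^ s₆ := by
        simp only [zetaG2Term, Real.norm_eq_abs, abs_mul, abs_inv, abs_pow, one_div, mul_inv,
          inv_pow]
        push_cast
        ac_rfl
    _ ≤ |(m : ℝ)|⁻¹ ^ s₁ * |(n : ℝ)|⁻¹ * 1 *
          (|((m + 3 * n : ℤ) : ℝ)|⁻¹ * |((m + 2 * n : ℤ) : ℝ)|⁻¹) * 1 := by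
        gcongr <;> first | exact le_one _ _ | exact le_self _ ‹_›
    _ ≤ |(m : ℝ)|⁻¹ ^ s₁ * |(n : ℝ)|⁻¹ * 1 * (2 * |(n : ℝ)|⁻¹) * 1 := by gcongr
    _ = 2 * (1 / |(m : ℝ)| ^ s₁ * (1 / |(n : ℝ)| ^ 2)) := by ring

theorem summable_zetaG2Term {s₁ s₂ s₄ s₅ : ℕ} (h₁ : 1 < s₁) (h₂ : s₂ ≠ 0) (h₄ : s₄ ≠ 0)
    (h₅ : s₅ ≠ 0) (s₃ s₆ : ℕ) :
    Summable fun p : ℤ × ℤ ↦ zetaG2Term s₁ s₂ s₃ s₄ s₅ s₆ p.1 p.2 := by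
  have habs {k : ℕ} (hk : 1 < k) : Summable fun m : ℤ ↦ 1 / |(m : ℝ)| ^ k := by
    simpa using (Real.summable_one_div_int_pow.mpr hk).abs
  exact (((habs h₁).mul_of_nonneg (habs one_lt_two) (fun _ ↦ by positivity)
    fun _ ↦ by positivity).mul_left 2).of_norm_bounded fun p ↦
      norm_zetaG2Term_le h₂ h₄ h₅ s₁ s₃ s₆ p.1 p.2

end Summability

/-- The amount by which the partial fraction expansion of
`1 / (t ^ 4 * (t + 1) * (t + 2) * (t + 3) * (2 * t + 3))` exceeds this function at `t`. It is zero
away from the poles; at a pole, where `1 / 0 = 0` makes the function vanish, it is the sum of the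
fractions whose denominators do not vanish. -/
noncomputable def poleCorrection (t : ℝ) : ℝ :=
  (if t = 0 then 8281 / 23328 else 0) + (if t = -1 then 1 / 4 else 0) +
    (if t = -2 then 1 / 4 else 0) + (if t = -3 then -7 / 972 else 0) +
    (if t = -3 / 2 then -128 / 243 else 0)

theorem zetaG2Term_411111_one_right (t : ℝ) :
    zetaG2Term 4 1 1 1 1 1 t 1 =
      1 / 18 * (1 / t ^ 4) - 5 / 36 * (1 / t ^ 3) + 145 / 648 * (1 / t ^ 2) - 385 / 1296 * t⁻¹ +
        1 / 2 * (t + 1)⁻¹ + 1 / 16 * (t + 2)⁻¹ - 1 / 486 * (t + 3)⁻¹ -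
        128 / 243 * (2 * t + 3)⁻¹ - poleCorrection t := by
  simp only [zetaG2Term, poleCorrection]
  by_cases h₀ : t = 0
  · subst h₀; norm_num
  by_cases h₁ : t = -1
  · subst h₁; norm_num
  by_cases h₂ : t = -2
  · subst h₂; norm_num
  by_cases h₃ : t = -3
  · subst h₃; norm_num
  by_cases h₄ : t = -3 / 2
  · subst h₄; norm_num
  have h₁' : t + 1 ≠ 0 := fun h ↦ h₁ (by linarith)
  have h₂' : t + 2 ≠ 0 := fun h ↦ h₂ (by linarith)
  have h₃' : t + 3 ≠ 0 := fun h ↦ h₃ (by linarith)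
  have h₄' : t * 2 + 3 ≠ 0 := fun h ↦ h₄ (by linarith)
  simp only [h₀, h₁, h₂, h₃, h₄, if_false, mul_one, pow_one]
  field_simp
  ring

theorem hasSum_poleCorrection_div {n : ℕ} (hn : n ≠ 0) :
    HasSum (fun m : ℤ ↦ poleCorrection (m / n))
      (19777 / 23328 - if Even n then 128 / 243 else 0) := by
  classical
  have hn' : (n : ℝ) ≠ 0 := Nat.cast_ne_zero.mpr hn
  have hinj : Function.Injective fun m : ℤ ↦ (m : ℝ) / n :=
    fun m m' h ↦ Int.cast_injective ((div_left_inj' hn').mp h)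
  have int_mem (j : ℤ) : (j : ℝ) ∈ Set.range fun m : ℤ ↦ (m : ℝ) / n :=
    ⟨j * n, by push_cast; exact mul_div_cancel_right₀ _ hn'⟩
  have hint (j : ℤ) (c : ℝ) : HasSum (fun m : ℤ ↦ if (m : ℝ) / n = j then c else 0) c := by
    simpa only [int_mem j, if_true] using hasSum_ite_eq_of_injective hinj (j : ℝ) c
  have half_mem : (-3 / 2 : ℝ) ∈ (Set.range fun m : ℤ ↦ (m : ℝ) / n) ↔ Even n := by
    constructor
    · rintro ⟨m, hm⟩
      have h : m * 2 = -3 * n := by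
        field_simp at hm
        rw [neg_mul, mul_comm 3]
        exact_mod_cast hm
      grind
    · rintro ⟨r, rfl⟩
      refine ⟨-3 * r, ?_⟩
      push_cast at hn' ⊢
      grind
  have hhalf := hasSum_ite_eq_of_injective hinj (-3 / 2 : ℝ) (-128 / 243 : ℝ)
  simp only [half_mem] at hhalf
  convert ((((hint 0 (8281 / 23328)).add (hint (-1) (1 / 4))).add (hint (-2) (1 / 4))).add
    (hint (-3) (-7 / 972))).add hhalf using 1
  · simp [poleCorrection]
  · split_ifs <;> norm_num

theorem hasSum_symmetricIco_zetaG2Term_div_one {n : ℕ} (hn : n ≠ 0) :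
    HasSum (fun m : ℤ ↦ zetaG2Term 4 1 1 1 1 1 (m / n) 1)
      (1 / 9 * (riemannZeta 4).re * n ^ 4 + 145 / 324 * (riemannZeta 2).re * n ^ 2 -
        (19777 / 23328 - if Even n then 128 / 243 else 0)) (symmetricIco ℤ) := by
  have hpow {k : ℕ} (hk : 1 < k) (heven : Even k) : HasSum (fun m : ℤ ↦ 1 / (m / n : ℝ) ^ k)
      (n ^ k * (2 * (riemannZeta k).re)) (symmetricIco ℤ) :=
    hasSum_one_div_div_pow
      ((hasSum_one_div_int_pow_of_even hk heven).mono_left (symmetricIco ℤ).le_atTop) n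
  have hlin {a b : ℝ} (ha : a ≠ 0) (k : ℤ) (hk : 2 * b = k * a) :
      HasSum (fun m : ℤ ↦ (a * (m / n) + b)⁻¹) 0 (symmetricIco ℤ) :=
    hasSum_symmetricIco_inv_mul_div_add ha hk hn
  have hpole : HasSum (fun m : ℤ ↦ poleCorrection (m / n)) _ (symmetricIco ℤ) :=
    (hasSum_poleCorrection_div hn).mono_left (symmetricIco ℤ).le_atTop
  have hpow₄ := (hpow (k := 4) (by decide) (by decide)).mul_left (1 / 18)
  have hpow₃ := (hasSum_one_div_div_pow (hasSum_symmetricIco_one_div_pow_of_odd (k := 3)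
    (by decide)) n).mul_left (5 / 36)
  have hpow₂ := (hpow (k := 2) (by decide) (by decide)).mul_left (145 / 648)
  have hlin₀ := (hlin (b := 0) one_ne_zero 0 (by norm_num)).mul_left (385 / 1296)
  have hlin₁ := (hlin (b := 1) one_ne_zero 2 (by norm_num)).mul_left (1 / 2)
  have hlin₂ := (hlin (b := 2) one_ne_zero 4 (by norm_num)).mul_left (1 / 16)
  have hlin₃ := (hlin (b := 3) one_ne_zero 6 (by norm_num)).mul_left (1 / 486)
  have hlin₂₃ := (hlin (b := 3) two_ne_zero 3 (by norm_num)).mul_left (128 / 243)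
  convert! ((((((((hpow₄.sub hpow₃).add hpow₂).sub hlin₀).add hlin₁).add hlin₂).sub hlin₃).sub
    hlin₂₃).sub hpole) using 1
  · simp only [zetaG2Term_411111_one_right, one_mul, add_zero]
  · push_cast
    ring

theorem tsum_int_zetaG2Term_411111 {n : ℕ} (hn : n ≠ 0) :
    ∑' m : ℤ, zetaG2Term 4 1 1 1 1 1 m n =
      1 / 9 * (riemannZeta 4).re * (1 / n ^ 5) + 145 / 324 * (riemannZeta 2).re * (1 / n ^ 7) -
        (19777 / 23328 * (1 / n ^ 9) - 128 / 243 * if Even n then 1 / (n : ℝ) ^ 9 else 0) := by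
  have hn' : (n : ℝ) ≠ 0 := Nat.cast_ne_zero.mpr hn
  have hsum : Summable fun m : ℤ ↦ zetaG2Term 4 1 1 1 1 1 m n :=
    (summable_zetaG2Term (s₁ := 4) (s₂ := 1) (s₄ := 1) (s₅ := 1) (by decide) one_ne_zero
      one_ne_zero one_ne_zero 1 1).prod_symm.prod_factor (n : ℤ)
  have hscale (m : ℤ) : zetaG2Term 4 1 1 1 1 1 m n =
      zetaG2Term 4 1 1 1 1 1 (m / n) 1 / n ^ 9 := by
    have h := zetaG2Term_mul_mul 4 1 1 1 1 1 (m / n) 1 n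
    rwa [mul_div_cancel₀ _ hn', mul_one] at h
  have hcol := ((hasSum_symmetricIco_zetaG2Term_div_one hn).div_const ((n : ℝ) ^ 9)).congr_fun
    hscale
  rw [← tsum_eq_of_summable_unconditional (L := symmetricIco ℤ) hsum, hcol.tsum_eq]
  split_ifs
  · field_simp
  · simp only [mul_zero, sub_zero]
    field_simp

theorem zetaG2_eq_tsum_zetaG2Term (s₁ s₂ s₃ s₄ s₅ s₆ : ℕ) :
    zetaG2 s₁ s₂ s₃ s₄ s₅ s₆ =
      ∑' (m : ℕ+) (n : ℕ+), zetaG2Term s₁ s₂ s₃ s₄ s₅ s₆ (m : ℤ) (n : ℤ) := by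
  simp only [zetaG2, zetaG2Term, Int.cast_natCast]

theorem two_mul_zetaG2_eq_tsum_tsum_int {s₁ s₂ s₄ s₅ : ℕ} (h₁ : s₁ ≠ 0) (heven : Even s₁)
    (h₂ : s₂ ≠ 0) (hodd : Odd s₄) (h₅ : s₅ ≠ 0) :
    2 * zetaG2 s₁ s₂ s₂ s₄ s₅ s₅ =
      ∑' (n : ℕ+) (m : ℤ), zetaG2Term s₁ s₂ s₂ s₄ s₅ s₅ m n := by
  have h₁' : 1 < s₁ := by grind
  rw [zetaG2_eq_tsum_zetaG2Term]
  refine two_mul_tsum_tsum_pnat_eq_tsum_tsum_int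
    (f := fun m n ↦ zetaG2Term s₁ s₂ s₂ s₄ s₅ s₅ m n)
    (summable_zetaG2Term h₁' h₂ hodd.pos.ne' h₅ s₂ s₅) (fun n ↦ ?_) (fun m ↦ ?_)
    (fun m n ↦ ?_) fun m n ↦ ?_
  · rw [Int.cast_zero, zetaG2Term_zero_left h₁]
  · rw [Int.cast_zero, zetaG2Term_zero_right h₂]
  · have hsign : Odd (s₁ + s₂ + s₂ + s₄ + s₅ + s₅) := by grind
    simpa [hsign.neg_one_pow, div_neg] using zetaG2Term_mul_mul s₁ s₂ s₂ s₄ s₅ s₅ m n (-1)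
  · have hsign : Odd (s₂ + s₂ + s₄ + s₅ + s₅) := by grind
    simpa [hsign.neg_one_pow] using zetaG2Term_neg_sub s₁ s₂ s₂ s₄ s₅ s₅ m n

theorem zetaG2_411111_eq_re_riemannZeta :
    zetaG2 4 1 1 1 1 1 =
      1 / 18 * (riemannZeta 4).re * (riemannZeta 5).re +
        145 / 648 * (riemannZeta 2).re * (riemannZeta 7).re -
          19753 / 46656 * (riemannZeta 9).re := by
  have h₅ := hasSum_one_div_pnat_pow (k := 5) (by decide)
  have h₇ := hasSum_one_div_pnat_pow (k := 7) (by decide)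
  have h₉ := hasSum_one_div_pnat_pow (k := 9) (by decide)
  have h₉' := hasSum_ite_even_one_div_pnat_pow (k := 9) (by decide)
  have hsum := ((h₅.mul_left (1 / 9 * (riemannZeta 4).re)).add
    (h₇.mul_left (145 / 324 * (riemannZeta 2).re))).sub
      ((h₉.mul_left (19777 / 23328)).sub (h₉'.mul_left (128 / 243)))
  have hdouble := two_mul_zetaG2_eq_tsum_tsum_int (s₁ := 4) (s₂ := 1) (s₄ := 1) (s₅ := 1)
    four_ne_zero (by decide) one_ne_zero odd_one one_ne_zero
  simp only [tsum_int_zetaG2Term_411111 (PNat.ne_zero _)] at hdouble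
  rw [hsum.tsum_eq] at hdouble
  push_cast at hdouble
  linarith

theorem zetaG2_411111 :
    (zetaG2 4 1 1 1 1 1 : ℂ) =
      (1 / 18) * riemannZeta 4 * riemannZeta 5 + (145 / 648) * riemannZeta 2 * riemannZeta 7 - (19753 / 46656) * riemannZeta 9 := by
  rw [zetaG2_411111_eq_re_riemannZeta]
  push_cast
  simp only [ofReal_re_riemannZeta_ofNat]
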